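/- arXiv:2510.12261 — 2 statements merged into one kernel-verified Lean document; each statement's English description precedes it below -/
import Mathlib

section
/- One has det(λ·C) = 1. Moreover det(U) = 1 if r > 3, and det(U) = θ if r = 3. -/
theorem weil_aux_sign {r : ℕ} [Fact (Nat.Prime r)] (hr : Odd r) :
    Equiv.Perm.sign (Equiv.neg (ZMod r)) = (-1) ^ ((r - 1) / 2) := by
  have h2 : (Equiv.neg (ZMod r) : Equiv.Perm (ZMod r)) ^ 2 = 1 := by
    ext x; simp [pow_two]
  have hsupp : (Equiv.neg (ZMod r) : Equiv.Perm (ZMod r)).support.card = r - 1 := by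
    have : (Equiv.neg (ZMod r) : Equiv.Perm (ZMod r)).support = Finset.univ.erase 0 := by
      ext x
      simp only [Equiv.Perm.mem_support, Equiv.neg_apply, Finset.mem_erase, Finset.mem_univ,
        and_true]
      rw [not_iff_not, neg_eq_iff_add_eq_zero]
      constructor
      · intro h
        exact (ZMod.add_self_eq_zero_iff_eq_zero hr).1 h
      · rintro rfl; simp
    rw [this, Finset.card_erase_of_mem (Finset.mem_univ _), Finset.card_univ, ZMod.card]
  have hall : ∀ n ∈ (Equiv.neg (ZMod r) : Equiv.Perm (ZMod r)).cycleType, n = 2 := by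
    intro n hn
    have h1 := Equiv.Perm.dvd_of_mem_cycleType hn
    have h3 := Equiv.Perm.two_le_of_mem_cycleType hn
    have h4 := orderOf_dvd_of_pow_eq_one h2
    have := Nat.le_of_dvd (by norm_num) (h1.trans h4)
    omega
  have hrep := Multiset.eq_replicate_card.2 hall
  have hsum := Equiv.Perm.sum_cycleType (Equiv.neg (ZMod r) : Equiv.Perm (ZMod r))
  rw [Equiv.Perm.sign_of_cycleType, hsum, hsupp]
  rw [hrep, Multiset.sum_replicate, hsupp, smul_eq_mul] at hsum
  have : (Equiv.neg (ZMod r) : Equiv.Perm (ZMod r)).cycleType.card = (r - 1) / 2 := by omega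
  rw [this, pow_add, Even.neg_one_pow, one_mul]
  obtain ⟨k, rfl⟩ := hr
  simp

theorem weil_aux_sq {r : ℕ} [Fact (Nat.Prime r)]
    {𝔽 : Type*} [Field 𝔽] {θ : 𝔽} (hθ : IsPrimitiveRoot θ r)
    (C : Matrix (ZMod r) (ZMod r) 𝔽)
    (hC : ∀ i j : ZMod r, C i j = θ ^ (i * j).val) :
    C * C = (r : 𝔽) • (Equiv.neg (ZMod r)).permMatrix 𝔽 := by
  have hp : r.Prime := Fact.out
  ext i j
  rw [Matrix.mul_apply]
  have hpow : ∀ a b : ZMod r, θ ^ a.val * θ ^ b.val = θ ^ (a + b).val := by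
    intro a b
    rw [← pow_add, ZMod.val_add]
    conv_lhs => rw [← Nat.div_add_mod (a.val + b.val) r]
    rw [pow_add, pow_mul, hθ.pow_eq_one, one_pow, one_mul]
  have h1 : ∀ k, C i k * C k j = θ ^ ((i + j) * k).val := by
    intro k
    rw [hC, hC, hpow]; congr 2; ring
  simp only [h1, Matrix.smul_apply, Equiv.Perm.permMatrix, PEquiv.toMatrix_apply,
    Equiv.toPEquiv_apply, Equiv.neg_apply, Option.mem_def, Option.some.injEq]
  by_cases h : i + j = 0
  · have : -i = j := by rw [neg_eq_iff_add_eq_zero]; exact h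
    simp [h, this, ZMod.card]
  · have : -i ≠ j := by rw [Ne, neg_eq_iff_add_eq_zero]; exact h
    rw [if_neg this, smul_zero]
    rw [Fintype.sum_bijective (fun k : ZMod r => (i + j) * k) (mulLeft_bijective₀ _ h)
      _ (fun k : ZMod r => θ ^ k.val) (fun _ => rfl)]
    have hg := hθ.geom_sum_eq_zero hp.one_lt
    rw [← hg]
    refine Finset.sum_bij (fun k _ => k.val) ?_ ?_ ?_ ?_
    · intro k _; exact Finset.mem_range.2 (ZMod.val_lt k)
    · intro a _ b _ hab; exact ZMod.val_injective r hab
    · intro b hb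
      exact ⟨b, Finset.mem_univ _, ZMod.val_cast_of_lt (Finset.mem_range.1 hb)⟩
    · intros; rfl

theorem weil_aux_sum (m : ℕ) (hm : Odd m) (n : ℕ) :
    12 * ∑ k ∈ Finset.range (n + 1), (k * (k + m) / 2) = n * (n + 1) * (2 * n + 1 + 3 * m) := by
  induction n with
  | zero => simp
  | succ n ih =>
    rw [Finset.sum_range_succ, mul_add, ih]
    have : 2 ∣ (n + 1) * (n + 1 + m) := by
      rw [← even_iff_two_dvd]
      rcases Nat.even_or_odd (n + 1) with h | h
      · exact h.mul_right _
      · exact (h.add_odd hm).mul_left _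
    obtain ⟨c, hc⟩ := this
    rw [hc, Nat.mul_div_cancel_left _ (by norm_num)]
    have : 12 * c = 6 * ((n + 1) * (n + 1 + m)) := by rw [hc]; ring
    rw [this]; ring

/-- `det(λC) = 1`; `det(U) = 1` if `r > 3` and `det(U) = θ` if `r = 3`. -/
theorem weil_det_lamC_and_detU
    {r : ℕ} [Fact (Nat.Prime r)] (hr : Odd r)
    {𝔽 : Type*} [Field 𝔽] {θ : 𝔽} (hθ : IsPrimitiveRoot θ r)
    (C : Matrix (ZMod r) (ZMod r) 𝔽)
    (hC : ∀ i j : ZMod r, C i j = θ ^ (i * j).val)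
    (U : Matrix (ZMod r) (ZMod r) 𝔽)
    (hU : U = Matrix.diagonal fun ξ : ZMod r => θ ^ (ξ.val * (ξ.val + r) / 2))
    (lam : 𝔽) (hlam : lam = (-(r : 𝔽)) ^ ((r - 1) / 2) * C.det⁻¹) :
    (lam • C).det = 1 ∧ (3 < r → U.det = 1) ∧ (r = 3 → U.det = θ) := by
  have hp : r.Prime := Fact.out
  have hdU : U.det = θ ^ (∑ k ∈ Finset.range r, (k * (k + r) / 2)) := by
    rw [hU, Matrix.det_diagonal, Finset.prod_pow_eq_pow_sum]
    congr 1
    refine Finset.sum_bij (fun k _ => k.val) ?_ ?_ ?_ ?_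
    · intro k _; exact Finset.mem_range.2 (ZMod.val_lt k)
    · intro a _ b _ hab; exact ZMod.val_injective r hab
    · intro b hb
      exact ⟨b, Finset.mem_univ _, ZMod.val_cast_of_lt (Finset.mem_range.1 hb)⟩
    · intros; rfl
  refine ⟨?_, ?_, ?_⟩
  · have hr0 : (r : 𝔽) ≠ 0 := by
      have : NeZero r := ⟨hp.ne_zero⟩
      exact (hθ.neZero').out
    have hdet : C.det ^ 2 = (r : 𝔽) ^ r * (-1) ^ ((r - 1) / 2) := by
      rw [pow_two, ← Matrix.det_mul, weil_aux_sq hθ C hC, Matrix.det_smul, ZMod.card,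
        Matrix.det_permutation, weil_aux_sign hr]
      simp
    have hd0 : C.det ≠ 0 := by
      intro h
      rw [h] at hdet
      have : (r : 𝔽) ^ r * (-1) ^ ((r - 1) / 2) ≠ 0 :=
        mul_ne_zero (pow_ne_zero _ hr0) (pow_ne_zero _ (by simp))
      apply this
      rw [← hdet]; simp
    obtain ⟨k, hk⟩ := hr
    have hk2 : (r - 1) / 2 = k := by omega
    rw [hk2] at hdet hlam
    have hkey : (-(r : 𝔽)) ^ (k * r) = C.det ^ (2 * k) := by
      rw [pow_mul C.det, hdet, mul_pow, neg_pow, ← pow_mul, ← pow_mul, mul_comm, mul_comm r k]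
      congr 1
      rw [hk]
      rcases Nat.even_or_odd k with h | h
      · rw [(h.mul_right _).neg_one_pow, (h.mul_right _).neg_one_pow]
      · rw [(h.mul (odd_two_mul_add_one k)).neg_one_pow, (h.mul h).neg_one_pow]
    rw [Matrix.det_smul, ZMod.card, hlam, mul_pow, ← pow_mul, hkey, inv_pow]
    have : C.det ^ r = C.det ^ (2 * k) * C.det := by
      rw [← pow_succ, ← hk]
    rw [this]
    field_simp
  · intro h3
    rw [hdU, hθ.pow_eq_one_iff_dvd]
    have h := weil_aux_sum r hr (r - 1)
    rw [Nat.sub_add_cancel hp.one_le] at h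
    have hd : r ∣ 12 * ∑ k ∈ Finset.range r, (k * (k + r) / 2) := by
      rw [h]; exact (Dvd.intro_left _ rfl).mul_right _
    refine (hp.dvd_mul.1 hd).resolve_left ?_
    intro h12
    have : r ∣ 2 * 2 * 3 := h12
    rw [hp.dvd_mul, hp.dvd_mul] at this
    rcases this with (h | h) | h <;> have := Nat.le_of_dvd (by norm_num) h <;> omega
  · intro h3
    rw [hdU]
    subst h3
    have : θ ^ 3 = 1 := hθ.pow_eq_one
    have h7 : ∑ k ∈ Finset.range 3, (k * (k + 3) / 2) = 3 * 2 + 1 := by decide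
    rw [h7, pow_succ, pow_mul, this]; simp
end

section
/- In the unit group of the matrix ring, G ⊓ (R ⊔ Z) = G ⊓ Z, where R ⊔ Z denotes the subgroup generated by R and Z. -/
def weilW {r ℓ : ℕ} {𝔽 : Type*} [Field 𝔽] (ψ : AddChar (ZMod r) 𝔽) (c : 𝔽)
    (a b : Fin ℓ → ZMod r) : Matrix (Fin ℓ → ZMod r) (Fin ℓ → ZMod r) 𝔽 :=
  Matrix.of fun η ξ => if η = ξ + b then c * ψ (a ⬝ᵥ ξ) else 0

theorem weilW_mul {r ℓ : ℕ} [NeZero r] {𝔽 : Type*} [Field 𝔽] (ψ : AddChar (ZMod r) 𝔽) (c c' : 𝔽)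
    (a b a' b' : Fin ℓ → ZMod r) :
    weilW ψ c a b * weilW ψ c' a' b' = weilW ψ (c * c' * ψ (a ⬝ᵥ b')) (a + a') (b + b') := by
  ext η ξ
  rw [Matrix.mul_apply, Finset.sum_eq_single (ξ + b')]
  · simp only [weilW, Matrix.of_apply, if_true]
    have : (η = ξ + b' + b) ↔ (η = ξ + (b + b')) := by
      rw [add_assoc, add_comm b' b]
    by_cases h : η = ξ + (b + b')
    · rw [if_pos h, if_pos (this.2 h), dotProduct_add, add_dotProduct, AddChar.map_add_eq_mul,
        AddChar.map_add_eq_mul]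
      ring
    · rw [if_neg h, if_neg (fun h' => h (this.1 h')), zero_mul]
  · intro ζ _ hζ
    simp [weilW, hζ]
  · simp

theorem weilW_one {r ℓ : ℕ} {𝔽 : Type*} [Field 𝔽] (ψ : AddChar (ZMod r) 𝔽) (c : 𝔽) :
    weilW (ℓ := ℓ) ψ c 0 0 = c • 1 := by
  ext η ξ
  simp [weilW, Matrix.one_apply]

/-- The subgroup of scalar multiples of Heisenberg operators. -/
def weilS {r ℓ : ℕ} [NeZero r] {𝔽 : Type*} [Field 𝔽] (ψ : AddChar (ZMod r) 𝔽) :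
    Subgroup (Matrix (Fin ℓ → ZMod r) (Fin ℓ → ZMod r) 𝔽)ˣ where
  carrier := {x | ∃ c : 𝔽, c ≠ 0 ∧ ∃ a b, x.val = weilW ψ c a b}
  one_mem' := ⟨1, one_ne_zero, 0, 0, by rw [weilW_one]; simp⟩
  mul_mem' := by
    rintro x y ⟨c, hc, a, b, hx⟩ ⟨c', hc', a', b', hy⟩
    refine ⟨_, ?_, a + a', b + b', by rw [Units.val_mul, hx, hy, weilW_mul]⟩
    exact mul_ne_zero (mul_ne_zero hc hc') (AddChar.val_isUnit ψ _).ne_zero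
  inv_mem' := by
    rintro x ⟨c, hc, a, b, hx⟩
    refine ⟨c⁻¹ * ψ (a ⬝ᵥ b), mul_ne_zero (inv_ne_zero hc) (AddChar.val_isUnit ψ _).ne_zero,
      -a, -b, ?_⟩
    apply Units.inv_eq_of_mul_eq_one_right
    rw [hx, weilW_mul, add_neg_cancel, add_neg_cancel, weilW_one, dotProduct_neg]
    have : c * (c⁻¹ * ψ (a ⬝ᵥ b)) * ψ (-(a ⬝ᵥ b)) = 1 := by
      rw [← mul_assoc, mul_inv_cancel₀ hc, one_mul, ← AddChar.map_add_eq_mul]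
      simp
    rw [this, one_smul]

/-- Units commuting with `ξ ↦ -ξ`. -/
def weilP (r ℓ : ℕ) [NeZero r] (𝔽 : Type*) [Field 𝔽] :
    Subgroup (Matrix (Fin ℓ → ZMod r) (Fin ℓ → ZMod r) 𝔽)ˣ :=
  MonoidHom.eqLocus (Units.map (Matrix.reindexAlgEquiv 𝔽 𝔽
    (Equiv.neg (Fin ℓ → ZMod r))).toRingEquiv.toRingHom.toMonoidHom) (MonoidHom.id _)

theorem mem_weilP {r ℓ : ℕ} [NeZero r] {𝔽 : Type*} [Field 𝔽]
    (x : (Matrix (Fin ℓ → ZMod r) (Fin ℓ → ZMod r) 𝔽)ˣ) :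
    x ∈ weilP r ℓ 𝔽 ↔ ∀ η ξ, x.val (-η) (-ξ) = x.val η ξ := by
  change _ = _ ↔ _
  rw [← Units.val_inj, ← Matrix.ext_iff]
  rfl

theorem weil_neg_eq {r : ℕ} [Fact (Nat.Prime r)] (hr : Odd r) {z : ZMod r} (h : -z = z) :
    z = 0 := by
  have h2 : (2 : ZMod r) * z = 0 := by
    linear_combination -h
  rcases mul_eq_zero.1 h2 with h | h
  · exfalso
    have : ((2 : ℕ) : ZMod r) = 0 := by exact_mod_cast h
    rw [ZMod.natCast_eq_zero_iff] at this
    have h1 := (Fact.out : Nat.Prime r).two_le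
    have h3 := Nat.le_of_dvd (by norm_num) this
    obtain rfl : r = 2 := by omega
    exact absurd hr (by decide)
  · exact h

theorem weil_U_even {r : ℕ} [Fact (Nat.Prime r)] (hr : Odd r) {𝔽 : Type*} [Field 𝔽] {θ : 𝔽}
    (hθ : IsPrimitiveRoot θ r) (z : ZMod r) :
    θ ^ ((-z).val * ((-z).val + r) / 2) = θ ^ (z.val * (z.val + r) / 2) := by
  have key : ∀ n : ℕ, 2 * (n * (n + r) / 2) = n * (n + r) := by
    intro n
    apply Nat.mul_div_cancel'
    rcases Nat.even_or_odd n with h | h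
    · exact (h.mul_right _).two_dvd
    · exact ((h.add_odd hr).mul_left _).two_dvd
  have e := fun n => congrArg (Nat.cast : ℕ → ZMod r) (key n)
  have : ((((-z).val * ((-z).val + r) / 2 : ℕ)) : ZMod r) = ((z.val * (z.val + r) / 2 : ℕ)) := by
    have e1 := e (-z).val
    have e2 := e z.val
    rw [Nat.cast_mul, Nat.cast_mul, Nat.cast_add, ZMod.natCast_self, ZMod.natCast_zmod_val] at e1 e2
    set p : ZMod r := ((((-z).val * ((-z).val + r) / 2 : ℕ)) : ZMod r)
    set q : ZMod r := (((z.val * (z.val + r) / 2 : ℕ)) : ZMod r)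
    push_cast at e1 e2
    have h4 : (2 : ZMod r) * (p - q) = 0 := by linear_combination e1 - e2
    have := weil_neg_eq hr (z := p - q) (by linear_combination -h4)
    exact sub_eq_zero.1 this
  rw [ZMod.natCast_eq_natCast_iff] at this
  have hm : ∀ n : ℕ, θ ^ (n % r) = θ ^ n := by
    intro n
    rw [hθ.eq_orderOf, pow_mod_orderOf]
  rw [← hm, this, hm]

/-- `G ⊓ (R ⊔ Z) = G ⊓ Z`. -/
theorem weil_G_inf_RZ
    {r : ℕ} [Fact (Nat.Prime r)] (hr : Odd r)
    {𝔽 : Type*} [Field 𝔽] {θ : 𝔽} (hθ : IsPrimitiveRoot θ r)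
    {ℓ : ℕ} (hℓ : 1 ≤ ℓ)
    (Cb : Matrix (ZMod r) (ZMod r) 𝔽)
    (hCb : ∀ i j : ZMod r, Cb i j = θ ^ (i * j).val)
    (lam : 𝔽) (hlam : lam = (-(r : 𝔽)) ^ ((r - 1) / 2) * Cb.det⁻¹)
    (uA uB uC uU : Fin ℓ → (Matrix (Fin ℓ → ZMod r) (Fin ℓ → ZMod r) 𝔽)ˣ)
    (uD : Fin ℓ → Fin ℓ → (Matrix (Fin ℓ → ZMod r) (Fin ℓ → ZMod r) 𝔽)ˣ)
    (huA : ∀ t, (uA t : Matrix (Fin ℓ → ZMod r) (Fin ℓ → ZMod r) 𝔽)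
      = Matrix.diagonal fun ξ => θ ^ (ξ t).val)
    (huB : ∀ t η ξ, (uB t : Matrix (Fin ℓ → ZMod r) (Fin ℓ → ZMod r) 𝔽) η ξ
      = if η t = ξ t + 1 ∧ ∀ i, i ≠ t → η i = ξ i then 1 else 0)
    (huC : ∀ t, (uC t : Matrix (Fin ℓ → ZMod r) (Fin ℓ → ZMod r) 𝔽)
      = lam • Matrix.of fun η ξ =>
          if ∀ i, i ≠ t → η i = ξ i then θ ^ (η t * ξ t).val else 0)
    (huU : ∀ t, (uU t : Matrix (Fin ℓ → ZMod r) (Fin ℓ → ZMod r) 𝔽)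
      = Matrix.diagonal fun ξ => θ ^ ((ξ t).val * ((ξ t).val + r) / 2))
    (huD : ∀ s t : Fin ℓ, s < t →
      (uD s t : Matrix (Fin ℓ → ZMod r) (Fin ℓ → ZMod r) 𝔽)
        = Matrix.diagonal fun ξ => θ ^ (ξ s * ξ t).val)
    (G R Z : Subgroup (Matrix (Fin ℓ → ZMod r) (Fin ℓ → ZMod r) 𝔽)ˣ)
    (hG : G = Subgroup.closure (Set.range uC ∪ Set.range uU ∪
      {x | ∃ s t : Fin ℓ, s < t ∧ x = uD s t}))
    (hR : R = Subgroup.closure (Set.range uA ∪ Set.range uB))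
    (hZ : ∀ x, x ∈ Z ↔ ∃ c : 𝔽ˣ,
      (x : Matrix (Fin ℓ → ZMod r) (Fin ℓ → ZMod r) 𝔽) = (c : 𝔽) • 1) :
    G ⊓ (R ⊔ Z) = G ⊓ Z := by
  let ψ : AddChar (ZMod r) 𝔽 := AddChar.zmodChar r hθ.pow_eq_one
  have hψ : ∀ z, ψ z = θ ^ z.val := fun z => AddChar.zmodChar_apply hθ.pow_eq_one z
  have hinj : Function.Injective ψ := by
    intro y z h
    rw [hψ, hψ] at h
    exact ZMod.val_injective r (hθ.pow_inj (ZMod.val_lt y) (ZMod.val_lt z) h)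
  have hRZ : R ⊔ Z ≤ weilS ψ := by
    apply sup_le
    · rw [hR, Subgroup.closure_le]
      rintro x (⟨t, rfl⟩ | ⟨t, rfl⟩)
      · refine ⟨1, one_ne_zero, Pi.single t 1, 0, ?_⟩
        rw [huA]
        ext η ξ
        by_cases h : η = ξ
        · subst h
          simp [weilW, hψ]
        · simp [weilW, h]
      · refine ⟨1, one_ne_zero, 0, Pi.single t 1, ?_⟩
        ext η ξ
        rw [huB]
        have : (η t = ξ t + 1 ∧ ∀ i, i ≠ t → η i = ξ i) ↔ η = ξ + Pi.single t 1 := by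
          constructor
          · rintro ⟨h1, h2⟩
            funext i
            by_cases hi : i = t
            · subst hi
              simp [h1]
            · simp [hi, h2 i hi]
          · rintro rfl
            refine ⟨by simp, fun i hi => by simp [hi]⟩
        simp [weilW, this]
    · intro x hx
      obtain ⟨c, hc⟩ := (hZ x).1 hx
      exact ⟨c, c.ne_zero, 0, 0, by rw [hc, weilW_one]⟩
  have hdiag : ∀ f : (Fin ℓ → ZMod r) → 𝔽, (∀ ξ, f (-ξ) = f ξ) → ∀ η ξ,
      Matrix.diagonal f (-η) (-ξ) = Matrix.diagonal f η ξ := by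
    intro f hf η ξ
    simp only [Matrix.diagonal_apply, neg_inj, hf]
  have hGP : G ≤ weilP r ℓ 𝔽 := by
    rw [hG, Subgroup.closure_le]
    rintro x ((⟨t, rfl⟩ | ⟨t, rfl⟩) | ⟨s, t, hst, rfl⟩)
    · refine (mem_weilP _).2 fun η ξ => ?_
      rw [huC]
      simp
    · refine (mem_weilP _).2 ?_
      rw [huU]
      exact hdiag _ fun ξ => weil_U_even hr hθ (ξ t)
    · refine (mem_weilP _).2 ?_
      rw [huD s t hst]
      exact hdiag _ fun ξ => by simp
  apply le_antisymm
  · rintro x ⟨hxG, hxR⟩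
    refine ⟨hxG, ?_⟩
    have hP := (mem_weilP x).1 (hGP hxG)
    obtain ⟨c, hc, a, b, hx⟩ := hRZ hxR
    rw [hx] at hP
    have hb : b = 0 := by
      have h := hP b 0
      by_cases hb : -b = b
      · funext i
        exact weil_neg_eq hr (congrFun hb i)
      · simp [weilW, hb] at h
        exact absurd h.symm hc
    subst hb
    have ha : a = 0 := by
      funext i
      have h := hP (Pi.single i 1) (Pi.single i 1)
      simp [weilW, hc] at h
      exact weil_neg_eq hr (hinj (by simpa using h))
    subst ha
    exact (hZ x).2 ⟨Units.mk0 c hc, by rw [hx, weilW_one]; rfl⟩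
  · exact inf_le_inf_left _ le_sup_right
end
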